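/- The set function μ is a probability measure on the Borel σ-field of C: μ(A) ≥ 0 for every Borel A ⊆ C, μ(C) = 1, and for every sequence (A_i)_{i≥1} of pairwise disjoint Borel subsets of C one has μ(⋃_{i=1}^∞ A_i) = Σ_{i=1}^∞ μ(A_i). -/

import Mathlib

open MeasureTheory Matrix Set Filter Topology
open scoped ENNReal

noncomputable section

/-- The space `C` of continuous functions on `[0,1]` vanishing at `0`,
with the supremum metric (inherited from `C([0,1], ℝ)`). -/
abbrev Cz : Type := {f : C(Set.Icc (0:ℝ) 1, ℝ) // f ⟨0, ⟨le_refl 0, zero_le_one⟩⟩ = 0}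

/-- The projection `π_n : C → ℝ^n`, `x ↦ (x(t_1), …, x(t_n))`. -/
def proj (t : ℕ → ℝ) (ht : ∀ k, t k ∈ Set.Ioc (0:ℝ) 1) (n : ℕ) (x : Cz) : Fin n → ℝ :=
  fun i => (x : C(Set.Icc (0:ℝ) 1, ℝ)) ⟨t i, Set.Ioc_subset_Icc_self (ht i)⟩

/-- The covariance matrix `M_n` with entries `min (t j) (t r)`. -/
def covM (t : ℕ → ℝ) (n : ℕ) : Matrix (Fin n) (Fin n) ℝ :=
  Matrix.of fun j r => min (t (j : ℕ)) (t (r : ℕ))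

/-- The centered Gaussian measure on `ℝ^n` with (positive definite) covariance matrix `M`:
the measure with density `u ↦ ((2π)^n det M)^{-1/2} exp (-⟨u, M⁻¹ u⟩ / 2)` w.r.t. Lebesgue
measure. -/
def gauss (n : ℕ) (M : Matrix (Fin n) (Fin n) ℝ) : Measure (Fin n → ℝ) :=
  volume.withDensity fun u =>
    ENNReal.ofReal ((((2 * Real.pi) ^ n * M.det) ^ (-(1:ℝ)/2 : ℝ)) *
      Real.exp (-(u ⬝ᵥ M⁻¹.mulVec u) / 2))

/-- `φ(K) = inf_{n ≥ 1} ν_n (π_n(K))`. -/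
def phi (t : ℕ → ℝ) (ht : ∀ k, t k ∈ Set.Ioc (0:ℝ) 1) (K : Set Cz) : ℝ≥0∞ :=
  ⨅ n : ℕ, gauss (n+1) (covM t (n+1)) (proj t ht (n+1) '' K)

/-- `μ(A) = sup {φ(K) : K ⊆ A, K compact}`. -/
def mu (t : ℕ → ℝ) (ht : ∀ k, t k ∈ Set.Ioc (0:ℝ) 1) (A : Set Cz) : ℝ≥0∞ :=
  ⨆ (K : Set Cz) (_ : K ⊆ A) (_ : IsCompact K), phi t ht K

instance : MeasurableSpace Cz := borel Cz
instance : BorelSpace Cz := ⟨rfl⟩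



/-- tent function -/
def tent (x : ℝ) : ℝ := max 0 (min x (1 - x))

lemma tent_cont : Continuous tent := by unfold tent; fun_prop

lemma tent_nonneg (x : ℝ) : 0 ≤ tent x := le_max_left _ _

lemma tent_le (x : ℝ) : tent x ≤ 1 := by
  unfold tent
  rcases le_total x (1 - x) with h | h <;> simp [h] <;> linarith

lemma tent_of_nonpos {x : ℝ} (h : x ≤ 0) : tent x = 0 := by
  unfold tent; exact max_eq_left ((min_le_left _ _).trans h)

lemma tent_of_one_le {x : ℝ} (h : 1 ≤ x) : tent x = 0 := by
  unfold tent; exact max_eq_left ((min_le_right _ _).trans (by linarith))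

lemma tent_sum (f : ℕ → ℝ) (m : ℕ) (x : ℝ) (h0 : 0 ≤ x) (hm : x ≤ m) :
    ∑ j ∈ Finset.range m, f j * tent (x - j) = f ⌊x⌋₊ * tent (x - ⌊x⌋₊) := by
  by_cases hx : ⌊x⌋₊ ∈ Finset.range m
  · rw [Finset.sum_eq_single_of_mem _ hx]
    intro j _ hj
    rcases lt_or_gt_of_ne hj with h | h
    · rw [tent_of_one_le, mul_zero]
      have h1 : ((j + 1 : ℕ) : ℝ) ≤ ⌊x⌋₊ := by exact_mod_cast h
      have h2 := Nat.floor_le h0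
      push_cast at h1; linarith
    · rw [tent_of_nonpos, mul_zero]
      have h1 : ((⌊x⌋₊ + 1 : ℕ) : ℝ) ≤ j := by exact_mod_cast h
      have h2 := Nat.lt_floor_add_one x
      push_cast at h1; linarith
  · have h1 : m ≤ ⌊x⌋₊ := by simpa using hx
    have h1' : (m : ℝ) ≤ ⌊x⌋₊ := by exact_mod_cast h1
    have h2 := Nat.floor_le h0
    rw [tent_of_nonpos (x := x - ⌊x⌋₊) (by linarith), mul_zero]
    apply Finset.sum_eq_zero
    intro j hj
    have h3 : ((j + 1 : ℕ) : ℝ) ≤ m := by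
      have := Finset.mem_range.1 hj; exact_mod_cast this
    rw [tent_of_one_le, mul_zero]
    push_cast at h3; linarith

/-- remainder covariance -/
def remR (x y : ℝ) : ℝ :=
  if ⌊x⌋₊ = ⌊y⌋₊ then min (x - ⌊x⌋₊) (y - ⌊x⌋₊) - (x - ⌊x⌋₊) * (y - ⌊x⌋₊) else 0

lemma remR_bound (x y : ℝ) (hx : 0 ≤ x) (hy : 0 ≤ y) : 0 ≤ remR x y ∧ remR x y ≤ 1 := by
  unfold remR
  split_ifs with h
  · have h1 := Nat.floor_le hx
    have h2 := Nat.lt_floor_add_one x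
    have h3 := Nat.floor_le hy
    have h4 := Nat.lt_floor_add_one y
    rw [← h] at h3 h4
    set a := x - ⌊x⌋₊ with ha
    set b := y - ⌊x⌋₊ with hb
    have : 0 ≤ a := by linarith
    have : a < 1 := by linarith
    have : 0 ≤ b := by linarith
    have : b < 1 := by linarith
    rcases le_total a b with hab | hab <;> simp [hab] <;> constructor <;> nlinarith
  · simp

lemma floor_two (x : ℝ) (hx : 0 ≤ x) :
    (x - ⌊x⌋₊ < 1/2 ∧ ⌊2 * x⌋₊ = 2 * ⌊x⌋₊) ∨ (1/2 ≤ x - ⌊x⌋₊ ∧ ⌊2 * x⌋₊ = 2 * ⌊x⌋₊ + 1) := by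
  have h1 := Nat.floor_le hx
  have h2 := Nat.lt_floor_add_one x
  rcases lt_or_ge (x - ⌊x⌋₊) (1/2) with h | h
  · left; refine ⟨h, ?_⟩
    rw [Nat.floor_eq_iff (by positivity)]; push_cast; constructor <;> linarith
  · right; refine ⟨h, ?_⟩
    rw [Nat.floor_eq_iff (by positivity)]; push_cast; constructor <;> linarith

lemma remR_rec (x y : ℝ) (hx : 0 ≤ x) (hy : 0 ≤ y) :
    remR x y = tent (y - ⌊x⌋₊) * tent (x - ⌊x⌋₊) + 1 / 2 * remR (2 * x) (2 * y) := by
  have h1 := Nat.floor_le hx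
  have h2 := Nat.lt_floor_add_one x
  have h3 := Nat.floor_le hy
  have h4 := Nat.lt_floor_add_one y
  have fx := floor_two x hx
  have fy := floor_two y hy
  by_cases h : ⌊x⌋₊ = ⌊y⌋₊
  · rw [← h] at h3 h4 fy
    have hR : remR x y = min (x - ⌊x⌋₊) (y - ⌊x⌋₊) - (x - ⌊x⌋₊) * (y - ⌊x⌋₊) := by
      rw [remR, if_pos h]
    rw [hR]
    unfold remR
    generalize hk : ⌊x⌋₊ = k at *
    have ex : x = (x - k) + k := by ring
    have ey : y = (y - k) + k := by ring
    generalize x - (k:ℝ) = a at *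
    generalize y - (k:ℝ) = b at *
    have a0 : 0 ≤ a := by linarith
    have a1 : a < 1 := by linarith
    have b0 : 0 ≤ b := by linarith
    have b1 : b < 1 := by linarith
    have ta : tent a = min a (1 - a) := max_eq_right (le_min a0 (by linarith))
    have tb : tent b = min b (1 - b) := max_eq_right (le_min b0 (by linarith))
    rw [ta, tb]
    rcases fx with ⟨fa, ga⟩ | ⟨fa, ga⟩ <;> rcases fy with ⟨fb, gb⟩ | ⟨fb, gb⟩
    · rw [ga, gb, if_pos rfl, ex, ey, min_eq_left (a := a) (b := 1 - a) (by linarith), min_eq_left (a := b) (b := 1 - b) (by linarith)]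
      push_cast
      rcases le_total a b with hab | hab
      · rw [min_eq_left hab, min_eq_left (by linarith)]; ring
      · rw [min_eq_right hab, min_eq_right (by linarith)]; ring
    · rw [ga, gb, if_neg (by omega), min_eq_left (a := a) (b := 1 - a) (by linarith),
        min_eq_right (a := b) (by linarith), min_eq_left (by linarith)]; ring
    · rw [ga, gb, if_neg (by omega), min_eq_left (a := b) (b := 1 - b) (by linarith),
        min_eq_right (a := a) (b := 1 - a) (by linarith), min_eq_right (by linarith)]; ring
    · rw [ga, gb, if_pos rfl, ex, ey, min_eq_right (a := a) (b := 1 - a) (by linarith), min_eq_right (a := b) (b := 1 - b) (by linarith)]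
      push_cast
      rcases le_total a b with hab | hab
      · rw [min_eq_left hab, min_eq_left (by linarith)]; ring
      · rw [min_eq_right hab, min_eq_right (by linarith)]; ring
  · have hn : ¬ ⌊2 * x⌋₊ = ⌊2 * y⌋₊ := by omega
    rw [remR, if_neg h, remR, if_neg hn]
    have : tent (y - ⌊x⌋₊) = 0 := by
      rcases lt_or_gt_of_ne h with h' | h'
      · apply tent_of_one_le
        have h1 : ((⌊x⌋₊ + 1 : ℕ) : ℝ) ≤ ⌊y⌋₊ := by exact_mod_cast h'
        push_cast at h1; linarith
      · apply tent_of_nonpos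
        have h1 : ((⌊y⌋₊ + 1 : ℕ) : ℝ) ≤ ⌊x⌋₊ := by exact_mod_cast h'
        push_cast at h1; linarith
    rw [this]; ring

lemma cov_partial (s t : ℝ) (hs : s ∈ Icc (0:ℝ) 1) (ht : t ∈ Icc (0:ℝ) 1) (N : ℕ) :
    s * t + ∑ n ∈ Finset.range N, ∑ j ∈ Finset.range (2 ^ n),
      (1/2:ℝ)^n * tent (2 ^ n * t - j) * tent (2 ^ n * s - j) =
    min s t - (1/2:ℝ)^N * remR (2 ^ N * s) (2 ^ N * t) := by
  induction N with
  | zero =>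
    obtain ⟨s0, s1⟩ := hs
    obtain ⟨t0, t1⟩ := ht
    simp only [Finset.range_zero, Finset.sum_empty, add_zero, pow_zero, one_mul]
    unfold remR
    rcases s1.lt_or_eq with s1 | rfl <;> rcases t1.lt_or_eq with t1 | rfl
    · rw [Nat.floor_eq_zero.2 s1, Nat.floor_eq_zero.2 t1]; simp
    · rw [Nat.floor_eq_zero.2 s1]; simp [s1.le]
    · rw [Nat.floor_eq_zero.2 t1]; simp [t1.le]
    · simp
  | succ N ih =>
    rw [Finset.sum_range_succ, ← add_assoc, ih,
      tent_sum (fun j => (1/2:ℝ)^N * tent (2 ^ N * t - j)) (2^N) (2^N * s)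
        (mul_nonneg (by positivity) hs.1) (by push_cast; nlinarith [hs.2, pow_pos (two_pos : (0:ℝ) < 2) N])]
    rw [remR_rec (2^N * s) (2^N*t) (mul_nonneg (by positivity) hs.1) (mul_nonneg (by positivity) ht.1)]
    rw [show (2:ℝ)^(N+1) * s = 2 * (2^N * s) by ring, show (2:ℝ)^(N+1) * t = 2 * (2^N * t) by ring]
    ring

lemma cov_tendsto (s t : ℝ) (hs : s ∈ Icc (0:ℝ) 1) (ht : t ∈ Icc (0:ℝ) 1) :
    Tendsto (fun N => s * t + ∑ n ∈ Finset.range N, ∑ j ∈ Finset.range (2 ^ n),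
      (1/2:ℝ)^n * tent (2 ^ n * t - j) * tent (2 ^ n * s - j)) atTop (𝓝 (min s t)) := by
  simp_rw [cov_partial s t hs ht]
  have h : Tendsto (fun N : ℕ => (1/2:ℝ)^N * remR (2 ^ N * s) (2 ^ N * t)) atTop (𝓝 0) := by
    have hb : ∀ N : ℕ, 0 ≤ remR (2 ^ N * s) (2 ^ N * t) ∧ remR (2 ^ N * s) (2 ^ N * t) ≤ 1 :=
      fun N => remR_bound _ _ (mul_nonneg (by positivity) hs.1) (mul_nonneg (by positivity) ht.1)
    refine squeeze_zero (fun N => mul_nonneg (by positivity) (hb N).1)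
      (fun N => mul_le_of_le_one_right (by positivity) (hb N).2)
      (tendsto_pow_atTop_nhds_zero_of_lt_one (by norm_num) (by norm_num))
  simpa using tendsto_const_nhds.sub h

open ProbabilityTheory in
lemma std_density (n : ℕ) : Measure.pi (fun _ : Fin n => gaussianReal 0 1) =
    volume.withDensity (fun u : Fin n → ℝ =>
      ENNReal.ofReal (((√(2 * Real.pi))⁻¹) ^ n * Real.exp (-(u ⬝ᵥ u) / 2))) := by
  apply Measure.pi_eq
  intro s hs
  have hpos : ∀ x, 0 ≤ gaussianPDFReal 0 1 x := fun x => gaussianPDFReal_nonneg 0 1 x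
  have hf : (fun u : Fin n → ℝ => ((√(2 * Real.pi))⁻¹) ^ n * Real.exp (-(u ⬝ᵥ u) / 2)) =
      fun u => ∏ i, gaussianPDFReal 0 1 (u i) := by
    funext u
    simp only [gaussianPDFReal_def, NNReal.coe_one, mul_one, sub_zero, Finset.prod_mul_distrib,
      Finset.prod_const, Finset.card_univ, Fintype.card_fin, ← Real.exp_sum]
    congr 2
    simp only [dotProduct, neg_div, Finset.sum_div, Finset.sum_neg_distrib, pow_two]
  have hint : Integrable (fun u : Fin n → ℝ => ∏ i, gaussianPDFReal 0 1 (u i))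
      (Measure.pi fun i => (volume : Measure ℝ).restrict (s i)) :=
    Integrable.fintype_prod (f := fun _ => gaussianPDFReal 0 1)
      fun i => (integrable_gaussianPDFReal 0 1).restrict
  rw [withDensity_apply _ (MeasurableSet.univ_pi hs)]
  rw [volume_pi, Measure.restrict_pi_pi]
  simp_rw [fun u : Fin n → ℝ => (congrFun hf u)]
  rw [← ofReal_integral_eq_lintegral_ofReal hint
    (Eventually.of_forall fun u => Finset.prod_nonneg fun i _ => hpos _)]
  rw [integral_fintype_prod_eq_prod (f := fun _ => gaussianPDFReal 0 1),
    ENNReal.ofReal_prod_of_nonneg (fun i _ => integral_nonneg hpos)]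
  refine Finset.prod_congr rfl fun i _ => ?_
  rw [gaussianReal_apply_eq_integral _ one_ne_zero]

open ProbabilityTheory in
lemma gauss_eq_map (n : ℕ) (A : Matrix (Fin n) (Fin n) ℝ) (hA : A.det ≠ 0) :
    gauss n (A * Aᵀ) = (Measure.pi fun _ : Fin n => gaussianReal 0 1).map (fun u => A *ᵥ u) := by
  have hmeas : Measurable (fun u : Fin n → ℝ => A *ᵥ u) :=
    (Continuous.matrix_mulVec continuous_const continuous_id).measurable
  have hvol : Measure.map (fun u : Fin n → ℝ => A *ᵥ u) volume =
      ENNReal.ofReal |A.det⁻¹| • volume := Real.map_matrix_volume_pi_eq_smul_volume_pi hA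
  have hd : 0 < |A.det| := abs_pos.2 hA
  have hvol' : (volume : Measure (Fin n → ℝ)) = ENNReal.ofReal |A.det| •
      Measure.map (fun u : Fin n → ℝ => A *ᵥ u) volume := by
    rw [hvol, smul_smul, ← ENNReal.ofReal_mul (abs_nonneg _), ← abs_mul, mul_inv_cancel₀ hA]
    simp
  have hAu : IsUnit A.det := isUnit_iff_ne_zero.2 hA
  have hkey : ∀ u : Fin n → ℝ, |A.det| * ((((2 * Real.pi) ^ n * (A * Aᵀ).det) ^ (-(1:ℝ)/2 : ℝ)) *
      Real.exp (-((A *ᵥ u) ⬝ᵥ (A * Aᵀ)⁻¹.mulVec (A *ᵥ u)) / 2)) =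
      ((√(2 * Real.pi))⁻¹) ^ n * Real.exp (-(u ⬝ᵥ u) / 2) := by
    intro u
    have h1 : (A *ᵥ u) ⬝ᵥ (A * Aᵀ)⁻¹.mulVec (A *ᵥ u) = u ⬝ᵥ u := by
      rw [Matrix.mul_inv_rev, Matrix.mulVec_mulVec, Matrix.mul_assoc, Matrix.nonsing_inv_mul A hAu,
        Matrix.mul_one, Matrix.dotProduct_mulVec, Matrix.vecMul_mulVec, ← Matrix.transpose_nonsing_inv,
        ← Matrix.transpose_mul,
        Matrix.nonsing_inv_mul A hAu, Matrix.transpose_one, Matrix.vecMul_one]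
    have h2 : ((2 * Real.pi) ^ n * (A * Aᵀ).det) ^ (-(1:ℝ)/2 : ℝ) = |A.det|⁻¹ * ((√(2 * Real.pi))⁻¹) ^ n := by
      rw [Matrix.det_mul, Matrix.det_transpose, neg_div, Real.rpow_neg (mul_nonneg (by positivity) (mul_self_nonneg _)),
        ← Real.sqrt_eq_rpow, Real.sqrt_mul (by positivity), Real.sqrt_mul_self_eq_abs, mul_inv,
        inv_pow, mul_comm]
      congr 2
      rw [Real.sqrt_eq_iff_mul_self_eq (by positivity) (by positivity), ← mul_pow,
        Real.mul_self_sqrt (by positivity)]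
    rw [h1, h2]
    field_simp
  ext s hs
  rw [Measure.map_apply hmeas hs, std_density, withDensity_apply _ (hmeas hs), gauss,
    withDensity_apply _ hs]
  conv_lhs => rw [hvol']
  have hm : Measurable fun u : Fin n → ℝ => ENNReal.ofReal ((((2 * Real.pi) ^ n * (A * Aᵀ).det) ^ (-(1:ℝ)/2 : ℝ)) *
      Real.exp (-(u ⬝ᵥ (A * Aᵀ)⁻¹.mulVec u) / 2)) := by
    apply Measurable.ennreal_ofReal
    apply Continuous.measurable
    have : Continuous fun u : Fin n → ℝ => u ⬝ᵥ (A * Aᵀ)⁻¹.mulVec u :=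
      Continuous.dotProduct continuous_id (Continuous.matrix_mulVec continuous_const continuous_id)
    fun_prop
  rw [Measure.restrict_smul, lintegral_smul_measure, setLIntegral_map hs hm hmeas, smul_eq_mul,
    ← lintegral_const_mul _ (show Measurable fun x => ENNReal.ofReal ((((2 * Real.pi) ^ n * (A * Aᵀ).det) ^ (-(1:ℝ)/2 : ℝ)) *
      Real.exp (-((A *ᵥ x) ⬝ᵥ (A * Aᵀ)⁻¹.mulVec (A *ᵥ x)) / 2)) from hm.comp hmeas)]
  refine lintegral_congr fun u => ?_
  rw [← ENNReal.ofReal_mul (abs_nonneg _), hkey]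

open ProbabilityTheory in
lemma char_lin {ι Ω : Type*} [MeasurableSpace Ω] (P : Measure Ω) [IsProbabilityMeasure P]
    (Z : ι → Ω → ℝ) (hm : ∀ i, Measurable (Z i)) (hi : iIndepFun Z P)
    (hl : ∀ i, P.map (Z i) = gaussianReal 0 1) (s : Finset ι) (c : ι → ℝ) :
    ∫ ω, Complex.exp ((∑ i ∈ s, c i * Z i ω : ℝ) * Complex.I) ∂P =
      Complex.exp (-((∑ i ∈ s, c i ^ 2 : ℝ) : ℂ) / 2) := by
  have hi' : iIndepFun (fun i ω => c i * Z i ω) P :=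
    hi.comp (fun i x => c i * x) (fun i => by fun_prop)
  have h := iIndepFun.charFun_map_fun_finsetSum_eq_prod (s := s) (X := fun i ω => c i * Z i ω) (P := P)
    (fun i _ => by fun_prop) (hi'.restrict s)
  have h1 := congrFun h 1
  have hl' : ∀ i, P.map (fun ω => c i * Z i ω) = gaussianReal 0 (NNReal.mk (c i ^ 2) (sq_nonneg _)) := by
    intro i
    have := gaussianReal_map_const_mul (μ := 0) (v := 1) (c i)
    rw [← hl i, Measure.map_map (by fun_prop) (hm i)] at this
    simpa [Function.comp_def] using this
  rw [charFun_apply_real, integral_map (by fun_prop) (by fun_prop), Finset.prod_apply] at h1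
  simp_rw [hl', charFun_gaussianReal] at h1
  rw [← Complex.exp_sum] at h1
  convert h1 using 3
  · simp
  · push_cast
    simp [neg_div, Finset.sum_div, Finset.sum_neg_distrib]

lemma dual_pi {n : ℕ} (L : StrongDual ℝ (Fin n → ℝ)) (x : Fin n → ℝ) :
    L x = ∑ i, L (Pi.single i 1) * x i := by
  conv_lhs => rw [pi_eq_sum_univ' x]
  rw [map_sum]
  refine Finset.sum_congr rfl fun i _ => ?_
  rw [map_smul, smul_eq_mul, mul_comm]

open ProbabilityTheory in
lemma char_gauss (n : ℕ) (A : Matrix (Fin n) (Fin n) ℝ) (hA : A.det ≠ 0)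
    (L : StrongDual ℝ (Fin n → ℝ)) :
    charFunDual (gauss n (A * Aᵀ)) L = Complex.exp (-((∑ i, ∑ j, L (Pi.single i 1) * L (Pi.single j 1) *
      (A * Aᵀ) i j : ℝ) : ℂ) / 2) := by
  have hmeas : Measurable (fun u : Fin n → ℝ => A *ᵥ u) :=
    (Continuous.matrix_mulVec continuous_const continuous_id).measurable
  rw [gauss_eq_map n A hA, charFunDual_apply, integral_map hmeas.aemeasurable (by fun_prop)]
  have h := char_lin (Measure.pi fun _ : Fin n => gaussianReal 0 1) (fun i ω => ω i) (by fun_prop)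
    (iIndepFun_pi (X := fun _ => id) (fun _ => aemeasurable_id))
    (fun i => (measurePreserving_eval _ i).map_eq) Finset.univ
    (fun k => ∑ i, L (Pi.single i 1) * A i k)
  convert h using 5 with u
  · rw [dual_pi]
    simp only [mulVec, dotProduct, Finset.mul_sum, Finset.sum_mul]
    rw [Finset.sum_comm]
    simp only [mul_assoc]
  · simp only [pow_two, Finset.sum_mul_sum, Matrix.mul_apply, Matrix.transpose_apply]
    rw [Finset.sum_comm (s := (Finset.univ : Finset (Fin n))) (t := Finset.univ) (f := fun k i =>
      ∑ j, L (Pi.single i 1) * A i k * (L (Pi.single j 1) * A j k))]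
    refine Finset.sum_congr rfl fun i _ => ?_
    rw [Finset.sum_comm]
    refine Finset.sum_congr rfl fun j _ => ?_
    rw [Finset.mul_sum]
    exact Finset.sum_congr rfl fun k _ => by ring

lemma covM_posSemidef (t : ℕ → ℝ) (ht : ∀ k, t k ∈ Set.Ioc (0:ℝ) 1) (n : ℕ) :
    (covM t n).PosSemidef := by
  have : covM t n = .of fun i j : Fin n ↦ volume.real ((Icc 0 (t i)) ∩ (Icc 0 (t j))) := by
    ext i j
    have := (ht i).1.le
    have := (ht j).1.le
    simp [covM, Icc_inter_Icc, *]
  rw [this]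
  exact posSemidef_matrix_measure_inter (fun _ ↦ measurableSet_Icc)
    (fun _ ↦ isCompact_Icc.measure_ne_top)

lemma covM_det (t : ℕ → ℝ) (ht : ∀ k, t k ∈ Set.Ioc (0:ℝ) 1) (htinj : Function.Injective t) (n : ℕ) :
    (covM t n).det ≠ 0 := by
  intro h0
  obtain ⟨v, hv, hMv⟩ := Matrix.exists_mulVec_eq_zero_iff.2 h0
  have hF : ∀ i : Fin n, ∑ j : Fin n, min (t i) (t j) * v j = 0 := fun i => by
    simpa [Matrix.mulVec, dotProduct, covM] using congrFun hMv i
  have hne : (Finset.univ.filter fun i => v i ≠ 0).Nonempty := by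
    obtain ⟨i, hi⟩ := Function.ne_iff.1 hv
    exact ⟨i, by simpa using hi⟩
  obtain ⟨i, hi, hmax⟩ := Finset.exists_max_image _ (fun i : Fin n => t i) hne
  simp only [Finset.mem_filter, Finset.mem_univ, true_and] at hi hmax
  -- a point `s < t i` above all the other support points with `F s = 0`
  obtain ⟨s, hs, hsF, hsj⟩ : ∃ s, s < t i ∧ (∑ j : Fin n, min s (t j) * v j = 0) ∧
      ∀ j, v j ≠ 0 → j ≠ i → t j ≤ s := by
    by_cases hne' : (Finset.univ.filter fun j => v j ≠ 0 ∧ j ≠ i).Nonempty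
    · obtain ⟨k, hk, hkmax⟩ := Finset.exists_max_image _ (fun i : Fin n => t i) hne'
      simp only [Finset.mem_filter, Finset.mem_univ, true_and] at hk hkmax
      refine ⟨t k, lt_of_le_of_ne (hmax k hk.1) ?_, hF k, fun j h1 h2 => hkmax j ⟨h1, h2⟩⟩
      intro h
      exact hk.2 (Fin.ext (htinj h))
    · refine ⟨0, (ht i).1, ?_, ?_⟩
      · refine Finset.sum_eq_zero fun j _ => ?_
        rw [min_eq_left (ht j).1.le, zero_mul]
      · intro j h1 h2
        exact absurd ⟨j, by simp [h1, h2]⟩ hne'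
  have h1 : ∑ j : Fin n, (min (t i) (t j) - min s (t j)) * v j = 0 := by
    simp only [sub_mul, Finset.sum_sub_distrib, hF i, hsF, sub_zero]
  rw [Finset.sum_eq_single i] at h1
  · rw [min_self, min_eq_left hs.le] at h1
    exact (mul_ne_zero (sub_pos.2 hs).ne' hi) h1
  · intro j _ hj
    by_cases hvj : v j = 0
    · simp [hvj]
    · rw [min_eq_right (hmax j hvj), min_eq_right (hsj j hvj hj)]; simp
  · simp

open scoped MatrixOrder in
lemma covM_factor (t : ℕ → ℝ) (ht : ∀ k, t k ∈ Set.Ioc (0:ℝ) 1) (htinj : Function.Injective t) (n : ℕ) :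
    ∃ A : Matrix (Fin n) (Fin n) ℝ, A.det ≠ 0 ∧ covM t n = A * Aᵀ := by
  have hp := covM_posSemidef t ht n
  obtain ⟨B, hB⟩ := CStarAlgebra.nonneg_iff_eq_star_mul_self.1 hp.nonneg
  refine ⟨Bᵀ, ?_, ?_⟩
  · have h := covM_det t ht htinj n
    rw [hB, Matrix.det_mul] at h
    rw [Matrix.det_transpose]
    exact right_ne_zero_of_mul h
  · rw [hB, Matrix.transpose_transpose]
    congr 1

lemma char_gauss_covM (t : ℕ → ℝ) (ht : ∀ k, t k ∈ Set.Ioc (0:ℝ) 1) (htinj : Function.Injective t)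
    (n : ℕ) (L : StrongDual ℝ (Fin n → ℝ)) :
    charFunDual (gauss n (covM t n)) L = Complex.exp (-((∑ i, ∑ j, L (Pi.single i 1) *
      L (Pi.single j 1) * min (t i) (t j) : ℝ) : ℂ) / 2) := by
  obtain ⟨A, hA, h⟩ := covM_factor t ht htinj n
  have := char_gauss n A hA L
  rw [← h] at this
  exact this

open ProbabilityTheory in
lemma gauss_covM_prob (t : ℕ → ℝ) (ht : ∀ k, t k ∈ Set.Ioc (0:ℝ) 1) (htinj : Function.Injective t)
    (n : ℕ) : IsProbabilityMeasure (gauss n (covM t n)) := by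
  obtain ⟨A, hA, h⟩ := covM_factor t ht htinj n
  rw [h, gauss_eq_map n A hA]
  have hmeas : Measurable (fun u : Fin n → ℝ => A *ᵥ u) :=
    (Continuous.matrix_mulVec continuous_const continuous_id).measurable
  exact Measure.isProbabilityMeasure_map hmeas.aemeasurable

/-- index of the coefficients -/
abbrev LIdx : Type := Option (Σ _ : ℕ, ℕ)

/-- fourth root of 1/2 -/
def rr : ℝ := √√(1/2)

lemma rr_pos : 0 < rr := by unfold rr; positivity
lemma rr_four : rr ^ 4 = 1/2 := by
  unfold rr
  rw [show 4 = 2 * 2 from rfl, pow_mul, Real.sq_sqrt (by positivity), Real.sq_sqrt (by norm_num)]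
lemma rr_lt : rr < 1 := by
  by_contra h
  have := one_le_pow₀ (not_lt.1 h) (n := 4)
  rw [rr_four] at this; norm_num at this

/-- Schauder functions -/
def schau (n j : ℕ) : C(Set.Icc (0:ℝ) 1, ℝ) :=
  ⟨fun x => rr ^ (2 * n) * tent (2 ^ n * (x : ℝ) - j), by
    have := tent_cont
    fun_prop⟩

/-- n-th level -/
def lev (n : ℕ) (ω : LIdx → ℝ) : C(Set.Icc (0:ℝ) 1, ℝ) :=
  ∑ j ∈ Finset.range (2 ^ n), ω (some ⟨n, j⟩) • schau n j

/-- partial sums -/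
def pW (N : ℕ) (ω : LIdx → ℝ) : C(Set.Icc (0:ℝ) 1, ℝ) :=
  ω none • ⟨Subtype.val, continuous_subtype_val⟩ + ∑ n ∈ Finset.range N, lev n ω

lemma lev_apply (n : ℕ) (ω : LIdx → ℝ) (x : Set.Icc (0:ℝ) 1) :
    lev n ω x = ∑ j ∈ Finset.range (2 ^ n), (ω (some ⟨n, j⟩) * rr ^ (2 * n)) * tent (2 ^ n * (x : ℝ) - j) := by
  simp only [lev, ContinuousMap.coe_sum, Finset.sum_apply, ContinuousMap.coe_smul, Pi.smul_apply,
    smul_eq_mul]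
  exact Finset.sum_congr rfl fun j _ => (mul_assoc _ _ _).symm

lemma lev_eq (n : ℕ) (ω : LIdx → ℝ) (x : Set.Icc (0:ℝ) 1) :
    lev n ω x = ω (some ⟨n, ⌊2 ^ n * (x:ℝ)⌋₊⟩) * rr ^ (2 * n) *
      tent (2 ^ n * (x : ℝ) - ⌊2 ^ n * (x:ℝ)⌋₊) := by
  rw [lev_apply]
  exact tent_sum (fun j => ω (some ⟨n, j⟩) * rr ^ (2 * n)) (2^n) (2 ^ n * (x:ℝ))
    (mul_nonneg (by positivity) x.2.1) (by
      push_cast; exact mul_le_of_le_one_right (by positivity) x.2.2)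

lemma lev_norm (n : ℕ) (ω : LIdx → ℝ) :
    ‖lev n ω‖ ≤ rr ^ n + rr ^ (5 * n) * ∑ j ∈ Finset.range (2 ^ n), ω (some ⟨n, j⟩) ^ 4 := by
  have hr := rr_pos
  have hS : 0 ≤ ∑ j ∈ Finset.range (2 ^ n), ω (some ⟨n, j⟩) ^ 4 :=
    Finset.sum_nonneg fun j _ => by positivity
  rw [ContinuousMap.norm_le _ (by positivity)]
  intro x
  -- pointwise bound on each coefficient
  have hc : ∀ j ∈ Finset.range (2 ^ n), |ω (some ⟨n, j⟩)| * rr ^ (2 * n) ≤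
      rr ^ n + rr ^ (5 * n) * ∑ j ∈ Finset.range (2 ^ n), ω (some ⟨n, j⟩) ^ 4 := by
    intro j hj
    have h1 : ω (some ⟨n, j⟩) ^ 4 ≤ ∑ j ∈ Finset.range (2 ^ n), ω (some ⟨n, j⟩) ^ 4 :=
      Finset.single_le_sum (f := fun j => ω (some ⟨n, j⟩) ^ 4) (fun j _ => by positivity) hj
    refine le_trans ?_ (add_le_add le_rfl (mul_le_mul_of_nonneg_left h1 (by positivity)))
    set z := |ω (some ⟨n, j⟩)| with hz
    have hz4 : ω (some ⟨n, j⟩) ^ 4 = z ^ 4 := by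
      rw [hz]; exact (Even.pow_abs ⟨2, rfl⟩ _).symm
    have hz0 : 0 ≤ z := abs_nonneg _
    rw [hz4]
    set q := rr ^ n with hq
    have hq0 : 0 < q := by positivity
    rw [show rr ^ (2 * n) = q ^ 2 by rw [hq, ← pow_mul, mul_comm],
      show rr ^ (5 * n) = q ^ 5 by rw [hq, ← pow_mul, mul_comm]]
    rcases le_total (z * q) 1 with h | h
    · have : 0 ≤ q ^ 5 * z ^ 4 := by positivity
      nlinarith
    · have h3 : 1 ≤ (z * q) ^ 3 := one_le_pow₀ h
      have : 0 ≤ z * q ^ 2 * ((z * q) ^ 3 - 1) := mul_nonneg (by positivity) (by linarith)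
      nlinarith
  rw [lev_eq, Real.norm_eq_abs, abs_mul, abs_mul, abs_of_nonneg (tent_nonneg _),
    abs_of_nonneg (show 0 ≤ rr ^ (2 * n) by positivity)]
  by_cases hx : ⌊2 ^ n * (x:ℝ)⌋₊ ∈ Finset.range (2 ^ n)
  · exact (mul_le_of_le_one_right (by positivity) (tent_le _)).trans (hc _ hx)
  · have h1 : 2 ^ n ≤ ⌊2 ^ n * (x:ℝ)⌋₊ := by simpa using hx
    have h1' : ((2 ^ n : ℕ) : ℝ) ≤ ⌊2 ^ n * (x:ℝ)⌋₊ := by exact_mod_cast h1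
    have h2 : 2 ^ n * (x:ℝ) ≤ 2 ^ n := mul_le_of_le_one_right (by positivity) x.2.2
    push_cast at h1'
    rw [tent_of_nonpos (by linarith), mul_zero]
    positivity

lemma pW_zero (N : ℕ) (ω : LIdx → ℝ) : pW N ω ⟨0, ⟨le_refl 0, zero_le_one⟩⟩ = 0 := by
  have : ∀ n, lev n ω ⟨0, ⟨le_refl 0, zero_le_one⟩⟩ = 0 := by
    intro n
    rw [lev_apply]
    refine Finset.sum_eq_zero fun j _ => ?_
    rw [tent_of_nonpos (by simp), mul_zero]
  simp [pW, ContinuousMap.coe_sum, this]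

/-- partial sums in the space -/
def pWz (N : ℕ) (ω : LIdx → ℝ) : Cz := ⟨pW N ω, pW_zero N ω⟩

lemma pWz_cont (N : ℕ) : Continuous (pWz N) := by
  unfold pWz
  refine Continuous.subtype_mk ?_ _
  unfold pW lev
  fun_prop

lemma Cz_closed : IsClosed {f : C(Set.Icc (0:ℝ) 1, ℝ) | f ⟨0, ⟨le_refl 0, zero_le_one⟩⟩ = 0} :=
  isClosed_eq (by fun_prop) continuous_const

instance : CompleteSpace Cz := Cz_closed.completeSpace_coe

lemma pWz_dist (N : ℕ) (ω : LIdx → ℝ) : dist (pWz N ω) (pWz (N+1) ω) = ‖lev N ω‖ := by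
  rw [Subtype.dist_eq, dist_comm, dist_eq_norm]
  congr 1
  simp only [pWz, pW, Finset.sum_range_succ]
  abel

open ProbabilityTheory in
/-- iid standard normals -/
def PZ : Measure (LIdx → ℝ) := Measure.infinitePi (fun _ : LIdx => gaussianReal 0 1)

open ProbabilityTheory in
instance : IsProbabilityMeasure PZ := by unfold PZ; infer_instance

open ProbabilityTheory in
lemma PZ_eval (i : LIdx) : PZ.map (fun ω => ω i) = gaussianReal 0 1 :=
  (measurePreserving_eval_infinitePi (fun _ : LIdx => gaussianReal 0 1) i).map_eq

open ProbabilityTheory in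
lemma ae_summable : ∀ᵐ ω ∂PZ, Summable fun n => ‖lev n ω‖ := by
  set m : ℝ≥0∞ := ∫⁻ z, ENNReal.ofReal (z ^ 4) ∂(gaussianReal 0 1) with hm
  have hmfin : m ≠ ∞ := by
    have h := (memLp_id_gaussianReal' (μ := 0) (v := 1) 4 (by norm_num)).integrable_norm_pow (by norm_num)
    have h2 : Integrable (fun z : ℝ => z ^ 4) (gaussianReal 0 1) := by
      refine h.congr (Eventually.of_forall fun z => ?_)
      simp [Even.pow_abs (⟨2, rfl⟩ : Even 4)]
    exact h2.lintegral_lt_top.ne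
  have hr := rr_pos
  have hterm : ∀ n, ∫⁻ ω, ENNReal.ofReal (rr ^ (5 * n) * ∑ j ∈ Finset.range (2 ^ n), ω (some ⟨n, j⟩) ^ 4) ∂PZ
      = ENNReal.ofReal (rr ^ n) * m := by
    intro n
    have h1 : ∀ ω : LIdx → ℝ, ENNReal.ofReal (rr ^ (5 * n) * ∑ j ∈ Finset.range (2 ^ n), ω (some ⟨n, j⟩) ^ 4) =
        ENNReal.ofReal (rr ^ (5 * n)) * ∑ j ∈ Finset.range (2 ^ n), ENNReal.ofReal (ω (some ⟨n, j⟩) ^ 4) := by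
      intro ω
      rw [ENNReal.ofReal_mul (by positivity), ENNReal.ofReal_sum_of_nonneg fun j _ => by positivity]
    simp_rw [h1]
    rw [lintegral_const_mul _ (by fun_prop), lintegral_finsetSum _ (fun j _ => by fun_prop)]
    have h2 : ∀ j, ∫⁻ ω, ENNReal.ofReal (ω (some ⟨n, j⟩) ^ 4) ∂PZ = m := by
      intro j
      rw [hm, ← PZ_eval (some ⟨n, j⟩), lintegral_map (by fun_prop) (by fun_prop)]
    simp_rw [h2]
    rw [Finset.sum_const, Finset.card_range, nsmul_eq_mul, ← mul_assoc]
    congr 1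
    rw [show ((2 ^ n : ℕ) : ℝ≥0∞) = ENNReal.ofReal (2 ^ n) by
      rw [ENNReal.ofReal_pow (by norm_num)]; simp, ← ENNReal.ofReal_mul (by positivity)]
    congr 1
    rw [show 5 * n = n + 4 * n by ring, pow_add, pow_mul rr 4, rr_four, mul_assoc, ← mul_pow]
    norm_num
  have hms : ∀ n, Measurable fun ω : LIdx → ℝ => ENNReal.ofReal (rr ^ (5 * n) * ∑ j ∈ Finset.range (2 ^ n), ω (some ⟨n, j⟩) ^ 4) := by
    intro n
    have hc : Continuous fun ω : LIdx → ℝ => rr ^ (5 * n) * ∑ j ∈ Finset.range (2 ^ n), ω (some ⟨n, j⟩) ^ 4 := by fun_prop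
    exact hc.measurable.ennreal_ofReal
  have hsum : ∫⁻ ω, ∑' n, ENNReal.ofReal (rr ^ (5 * n) * ∑ j ∈ Finset.range (2 ^ n), ω (some ⟨n, j⟩) ^ 4) ∂PZ ≠ ∞ := by
    rw [lintegral_tsum fun n => (hms n).aemeasurable]
    simp_rw [hterm]
    rw [ENNReal.tsum_mul_right]
    refine ENNReal.mul_ne_top ?_ hmfin
    exact (summable_geometric_of_lt_one hr.le rr_lt).tsum_ofReal_ne_top
  have hae := ae_lt_top (Measurable.ennreal_tsum hms) hsum
  filter_upwards [hae] with ω hω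
  have hs : Summable fun n => rr ^ (5 * n) * ∑ j ∈ Finset.range (2 ^ n), ω (some ⟨n, j⟩) ^ 4 := by
    have := ENNReal.summable_toReal hω.ne
    refine this.congr fun n => ?_
    rw [ENNReal.toReal_ofReal]
    exact mul_nonneg (by positivity) (Finset.sum_nonneg fun j _ => by positivity)
  exact Summable.of_nonneg_of_le (fun n => norm_nonneg _) (fun n => lev_norm n ω)
    ((summable_geometric_of_lt_one hr.le rr_lt).add hs)

lemma exists_W : ∃ W : (LIdx → ℝ) → Cz, Measurable W ∧
    ∀ᵐ ω ∂PZ, Tendsto (fun N => pWz N ω) atTop (𝓝 (W ω)) := by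
  refine measurable_limit_of_tendsto_metrizable_ae (fun N => (pWz_cont N).measurable.aemeasurable) ?_
  filter_upwards [ae_summable] with ω hω
  apply cauchySeq_tendsto_of_complete
  apply cauchySeq_of_summable_dist
  simpa only [Nat.succ_eq_add_one, pWz_dist] using hω

lemma proj_cont (t : ℕ → ℝ) (ht : ∀ k, t k ∈ Set.Ioc (0:ℝ) 1) (n : ℕ) : Continuous (proj t ht n) := by
  unfold proj
  refine continuous_pi fun i => ?_
  exact (ContinuousEvalConst.continuous_eval_const _).comp continuous_subtype_val

/-- coefficient functions -/
def ccoef (x : ℝ) : LIdx → ℝ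
  | none => x
  | some ⟨n, j⟩ => rr ^ (2 * n) * tent (2 ^ n * x - j)

/-- index sets -/
def SN (N : ℕ) : Finset LIdx :=
  Finset.insertNone ((Finset.range N).sigma fun n => Finset.range (2 ^ n))

lemma pW_coef (N : ℕ) (ω : LIdx → ℝ) (x : Set.Icc (0:ℝ) 1) :
    pW N ω x = ∑ i ∈ SN N, ccoef x i * ω i := by
  unfold SN
  rw [Finset.sum_insertNone, Finset.sum_sigma]
  simp only [pW, ContinuousMap.add_apply, ContinuousMap.coe_smul, Pi.smul_apply,
    ContinuousMap.coe_mk, smul_eq_mul, ContinuousMap.coe_sum, Finset.sum_apply, lev_apply, ccoef]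
  congr 1
  · ring
  · refine Finset.sum_congr rfl fun n _ => Finset.sum_congr rfl fun j _ => by ring

lemma coef_cov (N : ℕ) (s t : ℝ) :
    ∑ i ∈ SN N, ccoef s i * ccoef t i = s*t + ∑ n ∈ Finset.range N, ∑ j ∈ Finset.range (2^n),
      (1/2:ℝ)^n * tent (2^n*t - j) * tent (2^n*s - j) := by
  unfold SN
  rw [Finset.sum_insertNone, Finset.sum_sigma]
  simp only [ccoef]
  congr 1
  refine Finset.sum_congr rfl fun n _ => Finset.sum_congr rfl fun j _ => ?_
  rw [← rr_four, ← pow_mul]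
  rw [show 4 * n = 2 * n + 2 * n by ring, pow_add]
  ring

open ProbabilityTheory in
lemma char_level (t : ℕ → ℝ) (ht : ∀ k, t k ∈ Set.Ioc (0:ℝ) 1) (n : ℕ)
    (L : StrongDual ℝ (Fin n → ℝ)) (N : ℕ) :
    ∫ ω, Complex.exp ((L (proj t ht n (pWz N ω)) : ℝ) * Complex.I) ∂PZ =
      Complex.exp (-((∑ i : Fin n, ∑ k : Fin n, L (Pi.single i 1) * L (Pi.single k 1) *
        (∑ p ∈ SN N, ccoef (t i) p * ccoef (t k) p) : ℝ) : ℂ) / 2) := by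
  have h1 : ∀ ω, L (proj t ht n (pWz N ω)) =
      ∑ p ∈ SN N, (∑ i : Fin n, L (Pi.single i 1) * ccoef (t i) p) * ω p := by
    intro ω
    rw [dual_pi]
    simp only [proj, pWz, pW_coef, Finset.mul_sum, Finset.sum_mul]
    rw [Finset.sum_comm]
    refine Finset.sum_congr rfl fun p _ => Finset.sum_congr rfl fun j _ => by ring
  have hind : iIndepFun (fun (i : LIdx) (ω : LIdx → ℝ) => ω i) PZ :=
    iIndepFun_infinitePi (P := fun _ : LIdx => gaussianReal 0 1) (X := fun _ => id) (fun _ => measurable_id)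
  have h2 := char_lin PZ (fun (i : LIdx) (ω : LIdx → ℝ) => ω i) (fun i => measurable_pi_apply i)
    hind PZ_eval (SN N) (fun p => ∑ i : Fin n, L (Pi.single i 1) * ccoef (t i) p)
  simp_rw [h1]
  rw [h2]
  congr 4
  simp_rw [sq, Finset.sum_mul_sum, Finset.mul_sum]
  rw [Finset.sum_comm]
  refine Finset.sum_congr rfl fun i _ => ?_
  rw [Finset.sum_comm]
  refine Finset.sum_congr rfl fun j _ => Finset.sum_congr rfl fun p _ => by ring

lemma law_eq (t : ℕ → ℝ) (ht : ∀ k, t k ∈ Set.Ioc (0:ℝ) 1) (htinj : Function.Injective t) (n : ℕ)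
    (W : (LIdx → ℝ) → Cz) (hW : Measurable W)
    (hlim : ∀ᵐ ω ∂PZ, Tendsto (fun N => pWz N ω) atTop (𝓝 (W ω))) :
    (PZ.map W).map (proj t ht n) = gauss n (covM t n) := by
  have := gauss_covM_prob t ht htinj n
  have hpm := (proj_cont t ht n).measurable
  refine Measure.ext_of_charFunDual ?_
  ext L
  rw [char_gauss_covM t ht htinj, charFunDual_apply, Measure.map_map hpm hW,
    integral_map (hpm.comp hW).aemeasurable (by
      have : Continuous fun v : Fin n → ℝ => Complex.exp ((L v : ℝ) * Complex.I) := by fun_prop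
      exact this.aestronglyMeasurable)]
  have hcont : Continuous fun x : Cz => Complex.exp ((L (proj t ht n x) : ℝ) * Complex.I) := by
    have := proj_cont t ht n
    fun_prop
  have hA : Tendsto (fun N => ∫ ω, Complex.exp ((L (proj t ht n (pWz N ω)) : ℝ) * Complex.I) ∂PZ) atTop
      (𝓝 (∫ ω, Complex.exp ((L (proj t ht n (W ω)) : ℝ) * Complex.I) ∂PZ)) := by
    refine tendsto_integral_of_dominated_convergence (fun _ => 1) (fun N => ?_) (integrable_const _)
      (fun N => Eventually.of_forall fun ω => ?_) ?_
    · exact (hcont.comp (pWz_cont N)).aestronglyMeasurable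
    · rw [Complex.norm_exp_ofReal_mul_I]
    · filter_upwards [hlim] with ω hω
      exact (hcont.tendsto _).comp hω
  refine tendsto_nhds_unique hA ?_
  simp_rw [char_level]
  have hc : Continuous fun r : ℝ => Complex.exp (-(r : ℂ) / 2) := by fun_prop
  refine (hc.tendsto _).comp ?_
  refine tendsto_finset_sum _ fun i _ => tendsto_finset_sum _ fun k _ => Tendsto.const_mul _ ?_
  simp_rw [coef_cov]
  exact cov_tendsto _ _ (Set.Ioc_subset_Icc_self (ht i)) (Set.Ioc_subset_Icc_self (ht k))

lemma inter_eq (t : ℕ → ℝ) (ht : ∀ k, t k ∈ Set.Ioc (0:ℝ) 1)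
    (htdense : Set.Icc (0:ℝ) 1 ⊆ closure (Set.range t)) (K : Set Cz) (hK : IsCompact K) :
    ⋂ n, proj t ht (n+1) ⁻¹' (proj t ht (n+1) '' K) = K := by
  apply Subset.antisymm
  · intro x hx
    simp only [mem_iInter, mem_preimage] at hx
    have hcl : ∀ n, IsClosed {y | proj t ht (n+1) y = proj t ht (n+1) x} := fun n =>
      isClosed_eq (proj_cont t ht _) continuous_const
    obtain ⟨y, hy⟩ := IsCompact.nonempty_iInter_of_sequence_nonempty_isCompact_isClosed
      (fun n => K ∩ {y | proj t ht (n+1) y = proj t ht (n+1) x})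
      (fun n y hy => ⟨hy.1, by
        ext i
        exact congrFun hy.2 (Fin.castSucc i)⟩)
      (fun n => by
        obtain ⟨y, hy, h⟩ := hx n
        exact ⟨y, hy, h⟩)
      (hK.inter_right (hcl 0))
      (fun n => hK.isClosed.inter (hcl n))
    rw [mem_iInter] at hy
    have hyx : y = x := by
      have hk : ∀ k, y.1 ⟨t k, Set.Ioc_subset_Icc_self (ht k)⟩ = x.1 ⟨t k, Set.Ioc_subset_Icc_self (ht k)⟩ :=
        fun k => congrFun (hy k).2 (Fin.last k)
      apply Subtype.ext
      apply DFunLike.coe_injective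
      have hd : Dense (Set.range fun k => (⟨t k, Set.Ioc_subset_Icc_self (ht k)⟩ : Set.Icc (0:ℝ) 1)) := by
        rw [Subtype.dense_iff]
        intro z hz
        rw [← range_comp]
        exact htdense hz
      exact Continuous.ext_on hd y.1.continuous x.1.continuous (by
        rintro _ ⟨k, rfl⟩
        exact hk k)
    exact hyx ▸ (hy 0).1
  · exact subset_iInter fun n => subset_preimage_image _ _

lemma phi_eq (t : ℕ → ℝ) (ht : ∀ k, t k ∈ Set.Ioc (0:ℝ) 1)
    (htdense : Set.Icc (0:ℝ) 1 ⊆ closure (Set.range t)) (P : Measure Cz) [IsProbabilityMeasure P]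
    (hP : ∀ n, P.map (proj t ht n) = gauss n (covM t n)) (K : Set Cz) (hK : IsCompact K) :
    phi t ht K = P K := by
  have hm : ∀ n, MeasurableSet (proj t ht (n+1) '' K) := fun n =>
    (hK.image (proj_cont t ht _)).measurableSet
  have hpm : ∀ n, Measurable (proj t ht n) := fun n => (proj_cont t ht n).measurable
  conv_rhs => rw [← inter_eq t ht htdense K hK]
  rw [Antitone.measure_iInter]
  · unfold phi
    refine iInf_congr fun n => ?_
    rw [← hP, Measure.map_apply (hpm _) (hm n)]
  · refine antitone_nat_of_succ_le fun n => ?_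
    rintro x ⟨y, hy, h⟩
    refine ⟨y, hy, ?_⟩
    ext i
    exact congrFun h (Fin.castSucc i)
  · exact fun n => (hpm _ (hm n)).nullMeasurableSet
  · exact ⟨0, measure_ne_top _ _⟩

lemma mu_eq (t : ℕ → ℝ) (ht : ∀ k, t k ∈ Set.Ioc (0:ℝ) 1)
    (htdense : Set.Icc (0:ℝ) 1 ⊆ closure (Set.range t)) (P : Measure Cz) [IsProbabilityMeasure P]
    (hP : ∀ n, P.map (proj t ht n) = gauss n (covM t n)) (A : Set Cz) (hA : MeasurableSet A) :
    mu t ht A = P A := by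
  rw [hA.measure_eq_iSup_isCompact]
  unfold mu
  refine iSup_congr fun K => iSup_congr fun _ => iSup_congr fun hK => phi_eq t ht htdense P hP K hK
/-- `μ` is a probability measure on the Borel σ-field of `C`:
it is nonnegative, `μ(C) = 1`, and it is countably additive on pairwise
disjoint Borel sets. -/
theorem stmt15 (t : ℕ → ℝ) (ht : ∀ k, t k ∈ Set.Ioc (0:ℝ) 1)
    (htinj : Function.Injective t)
    (htdense : Set.Icc (0:ℝ) 1 ⊆ closure (Set.range t)) :
    (∀ A : Set Cz, 0 ≤ mu t ht A) ∧
    mu t ht Set.univ = 1 ∧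
    ∀ A : ℕ → Set Cz, (∀ i, MeasurableSet (A i)) →
      Pairwise (Function.onFun Disjoint A) →
      mu t ht (⋃ i, A i) = ∑' i, mu t ht (A i) := by
  obtain ⟨W, hW, hlim⟩ := exists_W
  have hprob : IsProbabilityMeasure (PZ.map W) := Measure.isProbabilityMeasure_map hW.aemeasurable
  have hP := fun n => law_eq t ht htinj n W hW hlim
  have hmu := mu_eq t ht htdense (PZ.map W) hP
  refine ⟨fun A => zero_le, ?_, fun A hA hd => ?_⟩
  · rw [hmu _ MeasurableSet.univ, measure_univ]
  · rw [hmu _ (MeasurableSet.iUnion hA), measure_iUnion hd hA]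
    exact tsum_congr fun i => (hmu _ (hA i)).symm

end
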